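/- There exists a universal constant C > 0 such that the following holds for every positive integer n. Let μ be a probability distribution on 2^[n] × 2^[n] with marginals μ_A, μ_B whose mutual information I(A:B) = Σ_{A,B⊆[n]} μ(A,B) · log₂( μ(A,B) / (μ_A(A)·μ_B(B)) ) is at most k, and let ε ∈ (0, 1/2). Then there exist a positive integer m ≤ 2^{C·√(n(k+1)/ε)}, a partition of 2^[n] × 2^[n] into combinatorial rectangles R₁ = ℱ₁ × 𝒢₁, …, R_m = ℱ_m × 𝒢_m, and labels b₁, …, b_m ∈ {0, 1}, such that Σ_{i=1}^m Σ_{(A,B)∈R_i, DISJ_n(A,B)≠b_i} μ(A,B) ≤ ε; that is, when (A, B) is sampled from μ, the probability that the label of the rectangle containing (A, B) differs from DISJ_n(A, B) is at most ε. -/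

import Mathlib

open Finset Classical

/-!
Let `ν = μ_A × μ_B`. By the Markov inequality applied to `log₂ (μ / ν)`, outside a set of `μ`-weight
`ε / 2` one has `μ ≤ 2^T ν` with `T = 2(k+1)/ε` (`infoTerm_tail`). So it suffices to compute
disjointness under the *product* distribution `ν` with error `O(2^{-L})`, `L ≈ 8(k+1)/ε`, using
`2^{O(√(nL))}` rectangles (`product_partition`). If `L > n`, all of `A` can be announced.

For the product case put `s ≈ √(nL)` and `δ = 2^{-L}`, and keep a universe `U` known to contain
`A ∩ B`.

* If all sets `B` of the current rectangle have `|B ∩ U| ≥ s`, then either at most a `δ` fraction of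
  the pairs is disjoint and the rectangle is labelled intersecting, or some `B₀` is disjoint from a
  `δ` fraction of the sets `A`; for those `A` the universe shrinks to `U \ B₀` (`cost_big`). This
  happens at most about `n / s` times (`cost_universe`).
* If both traces on `U` are small, a derandomised form of the Håstad–Wigderson protocol is used
  (`cost_round`, `cost_small`): some `Z` contains `A ∩ U` for a `2^{-|A ∩ U|-1}` fraction of the pairs,
  while for disjoint pairs `B ∩ U ∩ Z` has at most `7/8` of the allowed size up to an exponentially
  small error. Once the traces have `O(L)` elements, one of them is announced outright.

To control the number of rectangles and the error together, `Cost w R c` bounds their sum, which is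
additive under splitting. For each class of rectangles the bound proved has the form
`K √(w(R) + 1) + η w(R)`. By concavity of the square root, repeatedly peeling off a piece with at
least a `p` fraction of the mass and constant `K` costs only a factor `4 / p` (`Cost.comb`).
Finally the weight is scaled by `M = (K / δ)²`, which turns the bound on the sum into bounds on both terms.
-/

/-! ### Partitions into labelled rectangles and their cost -/

/-- The weight of `p` if the label `b` is wrong for `p` (where `true` means disjoint), else `0`. -/
noncomputable def errW {n : ℕ} (w : Finset (Fin n) × Finset (Fin n) → ℝ) (b : Bool)
    (p : Finset (Fin n) × Finset (Fin n)) : ℝ :=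
  if (Disjoint p.1 p.2 ↔ b = true) then 0 else w p

/-- The total weight of a set of pairs. -/
noncomputable def mass {n : ℕ} (w : Finset (Fin n) × Finset (Fin n) → ℝ)
    (R : Finset (Finset (Fin n) × Finset (Fin n))) : ℝ := ∑ p ∈ R, w p

/-- `Cost w R c`: the set `R` of pairs can be partitioned into labelled rectangles so that
(number of rectangles) + (total `w`-weight of mislabelled pairs) is at most `c`. -/
inductive Cost {n : ℕ} (w : Finset (Fin n) × Finset (Fin n) → ℝ) :
    Finset (Finset (Fin n) × Finset (Fin n)) → ℝ → Prop
  | empty : Cost w ∅ 0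
  | leaf (F G : Finset (Finset (Fin n))) (b : Bool) :
      Cost w (F ×ˢ G) (1 + ∑ p ∈ F ×ˢ G, errW w b p)
  | join {R₁ R₂ : Finset (Finset (Fin n) × Finset (Fin n))} {c₁ c₂ : ℝ} :
      Disjoint R₁ R₂ → Cost w R₁ c₁ → Cost w R₂ c₂ → Cost w (R₁ ∪ R₂) (c₁ + c₂)
  | mono {R : Finset (Finset (Fin n) × Finset (Fin n))} {c c' : ℝ} :
      Cost w R c → c ≤ c' → Cost w R c'

section
variable {n : ℕ} {w : Finset (Fin n) × Finset (Fin n) → ℝ}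

theorem Cost.extract {R : Finset (Finset (Fin n) × Finset (Fin n))} {c : ℝ} (h : Cost w R c) :
    ∃ m : ℕ, ∃ F G : Fin m → Finset (Finset (Fin n)), ∃ b : Fin m → Bool,
      (∀ i j, i ≠ j → Disjoint (F i ×ˢ G i) (F j ×ˢ G j)) ∧
      (∀ p, p ∈ R ↔ ∃ i, p ∈ F i ×ˢ G i) ∧
      (m : ℝ) + ∑ i, ∑ p ∈ F i ×ˢ G i, errW w (b i) p ≤ c := by
  induction h with
  | empty => exact ⟨0, Fin.elim0, Fin.elim0, Fin.elim0, fun i => i.elim0, by simp, by simp⟩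
  | leaf F G b =>
    refine ⟨1, fun _ => F, fun _ => G, fun _ => b, ?_, by simp, by simp⟩
    intro i j hij
    exact absurd (Subsingleton.elim i j) hij
  | mono _ hc ih =>
    obtain ⟨m, F, G, b, h1, h2, h3⟩ := ih
    exact ⟨m, F, G, b, h1, h2, h3.trans hc⟩
  | join hd _ _ ih₁ ih₂ =>
    obtain ⟨m, F, G, b, h1, h2, h3⟩ := ih₁
    obtain ⟨m', F', G', b', h1', h2', h3'⟩ := ih₂
    have key : ∀ i j, Disjoint (F i ×ˢ G i) (F' j ×ˢ G' j) := by
      intro i j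
      refine Finset.disjoint_of_subset_left (fun p hp => (h2 p).2 ⟨i, hp⟩) ?_
      exact Finset.disjoint_of_subset_right (fun p hp => (h2' p).2 ⟨j, hp⟩) hd
    refine ⟨m + m', Fin.append F F', Fin.append G G', Fin.append b b', ?_, ?_, ?_⟩
    · intro i j
      induction i using Fin.addCases with
      | left i =>
        induction j using Fin.addCases with
        | left j =>
          intro hij
          simpa using h1 i j (fun e => hij (by rw [e]))
        | right j => intro _; simpa using key i j
      | right i =>
        induction j using Fin.addCases with
        | left j => intro _; simpa using (key j i).symm
        | right j =>
          intro hij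
          simpa using h1' i j (fun e => hij (by rw [e]))
    · intro p
      rw [Finset.mem_union, h2, h2']
      constructor
      · rintro (⟨i, hi⟩ | ⟨i, hi⟩)
        · exact ⟨Fin.castAdd m' i, by simpa using hi⟩
        · exact ⟨Fin.natAdd m i, by simpa using hi⟩
      · rintro ⟨i, hi⟩
        induction i using Fin.addCases with
        | left i => left; exact ⟨i, by simpa using hi⟩
        | right i => right; exact ⟨i, by simpa using hi⟩
    · rw [Fin.sum_univ_add]
      simp only [Fin.append_left, Fin.append_right]
      push_cast
      linarith

/-- Exchanging the two players. -/
theorem Cost.swap {R : Finset (Finset (Fin n) × Finset (Fin n))} {c : ℝ} (h : Cost w R c) :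
    Cost (fun p => w p.swap) (R.image Prod.swap) c := by
  induction h with
  | empty => simpa using Cost.empty
  | leaf F G b =>
    rw [Finset.image_swap_product]
    have h := Cost.leaf (w := fun p => w p.swap) G F b
    have e : ∑ p ∈ G ×ˢ F, errW (fun p => w p.swap) b p = ∑ p ∈ F ×ˢ G, errW w b p := by
      rw [Finset.sum_product_right, Finset.sum_product]
      refine Finset.sum_congr rfl fun A _ => Finset.sum_congr rfl fun B _ => ?_
      simp [errW, disjoint_comm]
    rwa [e] at h
  | mono _ hc ih => exact ih.mono hc
  | join hd _ _ ih₁ ih₂ =>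
    rw [Finset.image_union]
    exact Cost.join ((Finset.disjoint_image Prod.swap_injective).2 hd) ih₁ ih₂

theorem Cost.of_swap {F G : Finset (Finset (Fin n))} {c : ℝ}
    (h : Cost (fun p => w p.swap) (G ×ˢ F) c) : Cost w (F ×ˢ G) c := by
  have := h.swap
  rwa [Finset.image_swap_product] at this

theorem mass_swap (F G : Finset (Finset (Fin n))) :
    mass (fun p => w p.swap) (G ×ˢ F) = mass w (F ×ˢ G) := by
  unfold mass
  rw [Finset.sum_product_right, Finset.sum_product]
  rfl

theorem mass_nonneg (hw : ∀ p, 0 ≤ w p) (R) : 0 ≤ mass w R := Finset.sum_nonneg fun p _ => hw p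

theorem mass_mono (hw : ∀ p, 0 ≤ w p) {R R' : Finset (Finset (Fin n) × Finset (Fin n))}
    (h : R ⊆ R') : mass w R ≤ mass w R' :=
  Finset.sum_le_sum_of_subset_of_nonneg h fun p _ _ => hw p

theorem Cost.split_left {F F' G : Finset (Finset (Fin n))} {c c' : ℝ} (hF : F' ⊆ F)
    (h : Cost w (F' ×ˢ G) c) (h' : Cost w ((F \ F') ×ˢ G) c') : Cost w (F ×ˢ G) (c + c') := by
  have e : F ×ˢ G = F' ×ˢ G ∪ (F \ F') ×ˢ G := by
    rw [← Finset.union_product, Finset.union_sdiff_of_subset hF]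
  rw [e]
  refine Cost.join ?_ h h'
  exact Finset.disjoint_product.2 (Or.inl Finset.disjoint_sdiff)

theorem Cost.split_right {F G G' : Finset (Finset (Fin n))} {c c' : ℝ} (hG : G' ⊆ G)
    (h : Cost w (F ×ˢ G') c) (h' : Cost w (F ×ˢ (G \ G')) c') : Cost w (F ×ˢ G) (c + c') := by
  have e : F ×ˢ G = F ×ˢ G' ∪ F ×ˢ (G \ G') := by
    rw [← Finset.product_union, Finset.union_sdiff_of_subset hG]
  rw [e]
  refine Cost.join ?_ h h'
  exact Finset.disjoint_product.2 (Or.inr Finset.disjoint_sdiff)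

theorem mass_split_left {F F' G : Finset (Finset (Fin n))} (hF : F' ⊆ F) :
    mass w (F ×ˢ G) = mass w (F' ×ˢ G) + mass w ((F \ F') ×ˢ G) := by
  have e : F ×ˢ G = F' ×ˢ G ∪ (F \ F') ×ˢ G := by
    rw [← Finset.union_product, Finset.union_sdiff_of_subset hF]
  rw [e]
  exact Finset.sum_union (Finset.disjoint_product.2 (Or.inl Finset.disjoint_sdiff))

theorem mass_split_right {F G G' : Finset (Finset (Fin n))} (hG : G' ⊆ G) :
    mass w (F ×ˢ G) = mass w (F ×ˢ G') + mass w (F ×ˢ (G \ G')) := by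
  have e : F ×ˢ G = F ×ˢ G' ∪ F ×ˢ (G \ G') := by
    rw [← Finset.product_union, Finset.union_sdiff_of_subset hG]
  rw [e]
  exact Finset.sum_union (Finset.disjoint_product.2 (Or.inr Finset.disjoint_sdiff))

theorem errW_le (hw : ∀ p, 0 ≤ w p) (b : Bool) (p) : errW w b p ≤ w p := by
  unfold errW; split_ifs
  · exact hw p
  · exact le_rfl

theorem errW_nonneg (hw : ∀ p, 0 ≤ w p) (b : Bool) (p) : 0 ≤ errW w b p := by
  unfold errW; split_ifs
  · exact le_rfl
  · exact hw p

/-- A piece of mass `x ≥ p * v ≥ 1` cut from a total mass `v` pays for itself when its cost constant is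
smaller by the factor `4 / p`: by concavity the cost of the remainder drops by a multiple of
`x / √(v + 1)`. -/
theorem sqrt_step {v x p K : ℝ} (hp : 0 < p) (hp1 : p ≤ 1) (hK : 0 ≤ K) (hv : 1 ≤ p * v)
    (hx : p * v ≤ x) (hxv : x ≤ v) :
    K * √(x + 1) + 4 * K / p * √(v - x + 1) ≤ 4 * K / p * √(v + 1) := by
  have hv1 : 1 ≤ v := by nlinarith
  have hx1 : 1 ≤ x := hv.trans hx
  set a := √(v - x + 1)
  set b := √(v + 1)
  set c := √(x + 1)
  have ha : a ^ 2 = v - x + 1 := Real.sq_sqrt (by linarith)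
  have hb : b ^ 2 = v + 1 := Real.sq_sqrt (by linarith)
  have hc : c ^ 2 = x + 1 := Real.sq_sqrt (by linarith)
  have ha0 : 0 ≤ a := Real.sqrt_nonneg _
  have hb0 : 0 < b := Real.sqrt_pos.2 (by linarith)
  have hc0 : 0 < c := Real.sqrt_pos.2 (by linarith)
  have hab : a ≤ b := Real.sqrt_le_sqrt (by linarith)
  have h1 : x ≤ 2 * b * (b - a) := by nlinarith
  have h2 : p * b ≤ c * 1 := by
    have : (p * b) ^ 2 ≤ c ^ 2 := by
      rw [mul_pow, hb, hc]; nlinarith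
    rw [mul_one]
    exact (pow_le_pow_iff_left₀ (by positivity) hc0.le (by norm_num)).1 this
  have h3 : c * p ≤ 4 * (b - a) := by
    have : c * p * b ≤ 4 * (b - a) * b := by nlinarith
    exact le_of_mul_le_mul_right this hb0
  have h4 : K * c ≤ 4 * K / p * (b - a) := by
    rw [div_mul_eq_mul_div, le_div_iff₀ hp]
    nlinarith
  nlinarith

/-- Peeling: if every subrectangle of positive mass is either cheap or contains a subrectangle
with a `p`-fraction of its mass and cost constant `K`, then removing such pieces repeatedly gives
cost constant `4 * K / p`. -/
theorem Cost.comb (hw : ∀ p, 0 ≤ w p) {F₀ G : Finset (Finset (Fin n))} {p K η : ℝ} (hp : 0 < p)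
    (hp1 : p ≤ 1) (hK : 1 ≤ K) (hη : 0 ≤ η)
    (H : ∀ F ⊆ F₀, 0 < mass w (F ×ˢ G) →
      Cost w (F ×ˢ G) (1 + η * mass w (F ×ˢ G)) ∨
      ∃ F' ⊆ F, p * mass w (F ×ˢ G) ≤ mass w (F' ×ˢ G) ∧
        Cost w (F' ×ˢ G) (K * √(mass w (F' ×ˢ G) + 1) + η * mass w (F' ×ˢ G))) :
    ∀ F ⊆ F₀, Cost w (F ×ˢ G) (4 * K / p * √(mass w (F ×ˢ G) + 1) + η * mass w (F ×ˢ G)) := by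
  intro F
  induction F using Finset.strongInduction with
  | H F ih =>
    intro hF
    have hv0 := mass_nonneg hw (F ×ˢ G)
    have hs1 : 1 ≤ √(mass w (F ×ˢ G) + 1) := Real.one_le_sqrt.2 (by linarith)
    have hKp : 4 ≤ 4 * K / p := by rw [le_div_iff₀ hp]; nlinarith
    have hηv : 0 ≤ η * mass w (F ×ˢ G) := by positivity
    by_cases hv : p * mass w (F ×ˢ G) < 1
    · refine (Cost.leaf F G false).mono ?_
      have h1 : ∑ q ∈ F ×ˢ G, errW w false q ≤ mass w (F ×ˢ G) :=
        Finset.sum_le_sum fun q _ => errW_le hw _ q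
      have h2 : √(mass w (F ×ˢ G) + 1) ≤ 4 * K / p := by
        rw [Real.sqrt_le_left (by positivity), div_pow, le_div_iff₀ (by positivity)]
        nlinarith
      have h3 := Real.mul_self_sqrt (show 0 ≤ mass w (F ×ˢ G) + 1 by linarith)
      nlinarith
    · push Not at hv
      have hpos : 0 < mass w (F ×ˢ G) := by
        by_contra hcon; nlinarith
      rcases H F hF hpos with h | ⟨F', hF', hm, hc⟩
      · exact h.mono (by nlinarith)
      · have hne : F'.Nonempty := by
          rw [Finset.nonempty_iff_ne_empty]
          rintro rfl
          have e : mass w ((∅ : Finset (Finset (Fin n))) ×ˢ G) = 0 := by simp [mass]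
          linarith
        have h2 := ih (F \ F') (Finset.sdiff_ssubset hF' hne)
          (Finset.sdiff_subset.trans hF)
        refine (Cost.split_left hF' hc h2).mono ?_
        have hms := mass_split_left (w := w) (G := G) hF'
        have hm0 := mass_nonneg hw ((F \ F') ×ˢ G)
        have := sqrt_step hp hp1 (by linarith : 0 ≤ K) hv hm (by linarith)
        have e : mass w ((F \ F') ×ˢ G) = mass w (F ×ˢ G) - mass w (F' ×ˢ G) := by linarith
        rw [e]
        linarith
end

/-! ### Small traces -/

section
variable {n : ℕ} {w : Finset (Fin n) × Finset (Fin n) → ℝ}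

/-- Announcing `A ∩ U` costs two exact rectangles for every possible trace. -/
theorem cost_trace {U : Finset (Fin n)} {F G : Finset (Finset (Fin n))}
    (hU : ∀ A ∈ F, ∀ B ∈ G, A ∩ B ⊆ U) (T : Finset (Finset (Fin n))) :
    Cost w ((F.filter fun A => A ∩ U ∈ T) ×ˢ G) (2 * #T) := by
  induction T using Finset.induction_on with
  | empty => simpa using Cost.empty
  | insert S T hS ih =>
    set F' := F.filter fun A => A ∩ U = S with hF'
    have hdis : ∀ A ∈ F', ∀ B ∈ G, (Disjoint A B ↔ Disjoint S B) := by
      intro A hA B hB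
      obtain ⟨hAF, rfl⟩ := Finset.mem_filter.1 hA
      have h := hU A hAF B hB
      rw [Finset.disjoint_iff_inter_eq_empty, Finset.disjoint_iff_inter_eq_empty]
      have : A ∩ U ∩ B = A ∩ B := by
        ext i
        have := @h i
        simp only [Finset.mem_inter] at this ⊢
        tauto
      rw [this]
    have hsub : F' ⊆ F.filter fun A => A ∩ U ∈ insert S T := by
      intro A hA
      simp only [hF', Finset.mem_filter] at hA ⊢
      exact ⟨hA.1, by simp [hA.2]⟩
    have hrest : (F.filter fun A => A ∩ U ∈ insert S T) \ F' = F.filter fun A => A ∩ U ∈ T := by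
      ext A
      simp only [hF', Finset.mem_filter, Finset.mem_sdiff, Finset.mem_insert]
      constructor
      · tauto
      · rintro ⟨h1, h2⟩
        refine ⟨⟨h1, Or.inr h2⟩, fun h => hS (h.2 ▸ h2)⟩
    have h1 : Cost w (F' ×ˢ G) 2 := by
      have hG' : G.filter (fun B => Disjoint S B) ⊆ G := Finset.filter_subset _ _
      refine (Cost.split_right hG' (Cost.leaf _ _ true) (Cost.leaf _ _ false)).mono ?_
      rw [Finset.sum_eq_zero, Finset.sum_eq_zero]
      · norm_num
      · rintro ⟨A, B⟩ hp
        simp only [Finset.mem_product, Finset.mem_sdiff, Finset.mem_filter] at hp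
        have : ¬ Disjoint A B := by
          rw [hdis A hp.1 B hp.2.1]; tauto
        simp [errW, this]
      · rintro ⟨A, B⟩ hp
        simp only [Finset.mem_product, Finset.mem_filter] at hp
        have : Disjoint A B := by
          rw [hdis A hp.1 B hp.2.1]; tauto
        simp [errW, this]
    refine (Cost.split_left hsub h1 (by rw [hrest]; exact ih)).mono ?_
    rw [Finset.card_insert_of_notMem hS]
    push_cast
    linarith

theorem cost_base {U : Finset (Fin n)} {F G : Finset (Finset (Fin n))} {t : ℕ}
    (hU : ∀ A ∈ F, ∀ B ∈ G, A ∩ B ⊆ U) (hA : ∀ A ∈ F, #(A ∩ U) ≤ t) :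
    Cost w (F ×ˢ G) (2 * #(univ.filter fun S : Finset (Fin n) => #S ≤ t)) := by
  have h := cost_trace (w := w) hU (univ.filter fun S : Finset (Fin n) => #S ≤ t)
  rwa [Finset.filter_true_of_mem (fun A h => by simpa using hA A h)] at h

/-- The generating function of `#(B ∩ Z)` over all `Z ⊇ A`. -/
theorem sum_superset_pow {A B : Finset (Fin n)} (h : Disjoint A B) :
    ∑ Z : Finset (Fin n), (if A ⊆ Z then (3 : ℝ) ^ #(B ∩ Z) else 0)
      = 2 ^ n * (1 / 2) ^ #A * 2 ^ #B := by
  have h1 := Fintype.prod_add (ι := Fin n) (fun i => if i ∈ B then (3 : ℝ) else 1)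
    (fun i => if i ∈ A then (0 : ℝ) else 1)
  have h2 : ∀ Z : Finset (Fin n), (if A ⊆ Z then (3 : ℝ) ^ #(B ∩ Z) else 0) =
      (∏ i ∈ Z, if i ∈ B then (3 : ℝ) else 1) * ∏ i ∈ Zᶜ, if i ∈ A then (0 : ℝ) else 1 := by
    intro Z
    rw [Finset.prod_ite_mem, Finset.prod_const, Finset.inter_comm Z B]
    split_ifs with hZ
    · rw [Finset.prod_eq_one, mul_one]
      intro i hi
      rw [if_neg]
      intro hiA
      exact Finset.mem_compl.1 hi (hZ hiA)
    · obtain ⟨i, hiA, hiZ⟩ := Finset.not_subset.1 hZ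
      rw [Finset.prod_eq_zero (i := i) (Finset.mem_compl.2 hiZ) (by simp [hiA]), mul_zero]
  rw [Finset.sum_congr rfl fun Z _ => h2 Z, ← h1]
  have h3 : ∀ i, ((if i ∈ B then (3 : ℝ) else 1) + if i ∈ A then (0 : ℝ) else 1) =
      2 * (if i ∈ A then (1 / 2 : ℝ) else 1) * (if i ∈ B then (2 : ℝ) else 1) := by
    intro i
    by_cases hA : i ∈ A
    · have hB : i ∉ B := Finset.disjoint_left.1 h hA
      simp [hA, hB]
    · by_cases hB : i ∈ B <;> simp [hA, hB] <;> norm_num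
  rw [Finset.prod_congr rfl fun i _ => h3 i, Finset.prod_mul_distrib, Finset.prod_mul_distrib,
    Finset.prod_ite_mem, Finset.prod_ite_mem]
  simp

theorem sum_superset (A : Finset (Fin n)) :
    ∑ Z : Finset (Fin n), (if A ⊆ Z then (1 : ℝ) else 0) = 2 ^ n * (1 / 2) ^ #A := by
  simpa using sum_superset_pow (Finset.disjoint_empty_right A)

/-- Chernoff bound: among the `Z ⊇ A`, at most a `(4/5)^t` fraction contains more than `7/8` of a
set `B` disjoint from `A` with at most `t` elements. -/
theorem sum_superset_bad {A B : Finset (Fin n)} (h : Disjoint A B) {t t' : ℕ}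
    (ht : 7 * t ≤ 8 * (t' + 1)) (hB : #B ≤ t) :
    ∑ Z : Finset (Fin n), (if A ⊆ Z ∧ t' < #(B ∩ Z) then (1 : ℝ) else 0)
      ≤ (4 / 5) ^ t * (2 ^ n * (1 / 2) ^ #A) := by
  have h1 : ∑ Z : Finset (Fin n), (if A ⊆ Z ∧ t' < #(B ∩ Z) then (1 : ℝ) else 0)
      ≤ ∑ Z : Finset (Fin n), (if A ⊆ Z then (3 : ℝ) ^ #(B ∩ Z) else 0) / 3 ^ (t' + 1) := by
    refine Finset.sum_le_sum fun Z _ => ?_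
    by_cases hA : A ⊆ Z
    · by_cases hb : t' < #(B ∩ Z)
      · rw [if_pos ⟨hA, hb⟩, if_pos hA, le_div_iff₀ (by positivity), one_mul]
        exact pow_le_pow_right₀ (by norm_num) hb
      · rw [if_neg (by tauto)]; positivity
    · rw [if_neg (by tauto)]; positivity
  refine h1.trans ?_
  rw [← Finset.sum_div, sum_superset_pow h, div_le_iff₀ (by positivity)]
  have h2 : (2 : ℝ) ^ #B ≤ 2 ^ t := pow_le_pow_right₀ (by norm_num) hB
  have h3 : (2 : ℝ) ^ t ≤ (4 / 5) ^ t * 3 ^ (t' + 1) := by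
    refine (pow_le_pow_iff_left₀ (by positivity) (by positivity) (by norm_num : 8 ≠ 0)).1 ?_
    calc ((2 : ℝ) ^ t) ^ 8 = (2 ^ 8) ^ t := by rw [← pow_mul, ← pow_mul, mul_comm]
      _ ≤ ((4 / 5) ^ 8 * 3 ^ 7) ^ t := by gcongr; norm_num
      _ = ((4 / 5) ^ t) ^ 8 * 3 ^ (7 * t) := by
        rw [mul_pow, ← pow_mul, ← pow_mul, ← pow_mul, mul_comm 8 t]
      _ ≤ ((4 / 5) ^ t) ^ 8 * 3 ^ (8 * (t' + 1)) := by gcongr; norm_num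
      _ = ((4 / 5) ^ t * 3 ^ (t' + 1)) ^ 8 := by
        rw [mul_pow, ← pow_mul 3, mul_comm 8 (t' + 1)]
  calc (2 : ℝ) ^ n * (1 / 2) ^ #A * 2 ^ #B ≤ 2 ^ n * (1 / 2) ^ #A * ((4 / 5) ^ t * 3 ^ (t' + 1)) := by
        gcongr; exact h2.trans h3
    _ = _ := by ring

/-- A single set `Z` that contains the traces on `U` of a `2^{-a-1}` fraction of the pairs, and
such that among those pairs few are disjoint with `B ∩ U ∩ Z` still large. -/
theorem exists_good_Z (hw : ∀ p, 0 ≤ w p) {a t t' : ℕ} (ht : 7 * t ≤ 8 * (t' + 1))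
    {U : Finset (Fin n)} {F G : Finset (Finset (Fin n))}
    (hA : ∀ A ∈ F, #(A ∩ U) ≤ a) (hB : ∀ B ∈ G, #(B ∩ U) ≤ t) (hpos : 0 < mass w (F ×ˢ G)) :
    ∃ Z : Finset (Fin n),
      1 / 2 ^ (a + 1) * mass w (F ×ˢ G) ≤ mass w ((F.filter fun A => A ∩ U ⊆ Z) ×ˢ G) ∧
      ∑ p ∈ (F.filter fun A => A ∩ U ⊆ Z) ×ˢ (G.filter fun B => t' < #(B ∩ U ∩ Z)),
        errW w false p ≤ 2 * (4 / 5) ^ t * mass w ((F.filter fun A => A ∩ U ⊆ Z) ×ˢ G) := by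
  set X : Finset (Fin n) → ℝ := fun Z => mass w ((F.filter fun A => A ∩ U ⊆ Z) ×ˢ G) with hX
  set Y : Finset (Fin n) → ℝ := fun Z =>
    ∑ p ∈ (F.filter fun A => A ∩ U ⊆ Z) ×ˢ (G.filter fun B => t' < #(B ∩ U ∩ Z)),
        errW w false p with hY
  have hXeq : ∀ Z, X Z = ∑ p ∈ F ×ˢ G, w p * (if p.1 ∩ U ⊆ Z then 1 else 0) := by
    intro Z
    simp only [hX, mass, mul_ite, mul_one, mul_zero]
    rw [← Finset.sum_filter]
    refine Finset.sum_congr ?_ fun _ _ => rfl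
    ext p
    simp only [Finset.mem_product, Finset.mem_filter]
    tauto
  have hYeq : ∀ Z, Y Z = ∑ p ∈ F ×ˢ G,
      errW w false p * (if p.1 ∩ U ⊆ Z ∧ t' < #(p.2 ∩ U ∩ Z) then 1 else 0) := by
    intro Z
    simp only [hY, mul_ite, mul_one, mul_zero]
    rw [← Finset.sum_filter]
    refine Finset.sum_congr ?_ fun _ _ => rfl
    ext p
    simp only [Finset.mem_product, Finset.mem_filter]
    tauto
  have hXsum : ∑ Z, X Z = ∑ p ∈ F ×ˢ G, w p * (2 ^ n * (1 / 2) ^ #(p.1 ∩ U)) := by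
    simp only [hXeq]
    rw [Finset.sum_comm]
    refine Finset.sum_congr rfl fun p _ => ?_
    rw [← Finset.mul_sum, sum_superset]
  have hYX : ∑ Z, Y Z ≤ (4 / 5) ^ t * ∑ Z, X Z := by
    rw [hXsum, Finset.mul_sum]
    simp only [hYeq]
    rw [Finset.sum_comm]
    refine Finset.sum_le_sum fun p hp => ?_
    rw [← Finset.mul_sum]
    by_cases hd : Disjoint p.1 p.2
    · have hd' : Disjoint (p.1 ∩ U) (p.2 ∩ U) :=
        Finset.disjoint_of_subset_left Finset.inter_subset_left
          (Finset.disjoint_of_subset_right Finset.inter_subset_left hd)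
      have h1 := sum_superset_bad hd' ht (hB _ (Finset.mem_product.1 hp).2)
      calc _ ≤ w p * ((4 / 5) ^ t * (2 ^ n * (1 / 2) ^ #(p.1 ∩ U))) := by
            refine mul_le_mul (errW_le hw _ _) h1 (Finset.sum_nonneg fun Z _ => ?_) (hw p)
            split_ifs <;> norm_num
        _ = _ := by ring
    · have : errW w false p = 0 := by simp [errW, hd]
      rw [this, zero_mul]
      have := hw p
      positivity
  have hXlow : 2 ^ n * (1 / 2) ^ a * mass w (F ×ˢ G) ≤ ∑ Z, X Z := by
    rw [hXsum, mass, Finset.mul_sum]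
    refine Finset.sum_le_sum fun p hp => ?_
    have h1 : ((1 : ℝ) / 2) ^ a ≤ (1 / 2) ^ #(p.1 ∩ U) :=
      pow_le_pow_of_le_one (by norm_num) (by norm_num) (hA _ (Finset.mem_product.1 hp).1)
    have := hw p
    calc _ = w p * (2 ^ n * (1 / 2) ^ a) := by ring
      _ ≤ _ := by gcongr
  by_contra hcon
  push Not at hcon
  have hq : (0 : ℝ) < (4 / 5) ^ t := by positivity
  have hlt : ∑ Z, X Z < ∑ Z : Finset (Fin n),
      (1 / 2 ^ (a + 1) * mass w (F ×ˢ G) + Y Z / (2 * (4 / 5) ^ t)) := by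
    refine Finset.sum_lt_sum_of_nonempty Finset.univ_nonempty fun Z _ => ?_
    have hY0 : 0 ≤ Y Z := Finset.sum_nonneg fun p _ => errW_nonneg hw _ p
    have hY0' : 0 ≤ Y Z / (2 * (4 / 5) ^ t) := by positivity
    rcases lt_or_ge (X Z) (1 / 2 ^ (a + 1) * mass w (F ×ˢ G)) with h | h
    · linarith
    · have h1 : X Z < Y Z / (2 * (4 / 5) ^ t) := by
        rw [lt_div_iff₀ (by positivity), mul_comm]
        exact hcon Z h
      have : 0 < 1 / 2 ^ (a + 1) * mass w (F ×ˢ G) := by positivity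
      linarith
  rw [Finset.sum_add_distrib, ← Finset.sum_div, Finset.sum_const, Finset.card_univ,
    Fintype.card_finset, Fintype.card_fin, nsmul_eq_mul] at hlt
  have h2 : (∑ Z, Y Z) / (2 * (4 / 5) ^ t) ≤ (∑ Z, X Z) / 2 := by
    rw [div_le_div_iff₀ (by positivity) (by norm_num)]
    linarith
  have h3 : ((2 ^ n : ℕ) : ℝ) * (1 / 2 ^ (a + 1) * mass w (F ×ˢ G))
      = 2 ^ n * (1 / 2) ^ a * mass w (F ×ˢ G) / 2 := by
    push_cast
    rw [pow_succ, div_pow, one_pow]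
    field_simp
  rw [h3] at hlt
  linarith

/-- One round: Alice names a set `Z ⊇ A ∩ U`, and for disjoint pairs Bob's trace on the new
universe `U ∩ Z` shrinks from `t` to `t'` except with tiny probability. -/
theorem cost_round (hw : ∀ p, 0 ≤ w p) {a t t' : ℕ} (ht : 7 * t ≤ 8 * (t' + 1)) {K η : ℝ}
    (hK : 1 ≤ K) (hη : 0 ≤ η)
    (IH : ∀ (U : Finset (Fin n)) (F G : Finset (Finset (Fin n))),
      (∀ A ∈ F, ∀ B ∈ G, A ∩ B ⊆ U) → (∀ A ∈ F, #(A ∩ U) ≤ a) → (∀ B ∈ G, #(B ∩ U) ≤ t') →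
      Cost w (F ×ˢ G) (K * √(mass w (F ×ˢ G) + 1) + η * mass w (F ×ˢ G)))
    (U : Finset (Fin n)) (F G : Finset (Finset (Fin n)))
    (hU : ∀ A ∈ F, ∀ B ∈ G, A ∩ B ⊆ U) (hA : ∀ A ∈ F, #(A ∩ U) ≤ a)
    (hB : ∀ B ∈ G, #(B ∩ U) ≤ t) :
    Cost w (F ×ˢ G) (2 ^ (a + 4) * K * √(mass w (F ×ˢ G) + 1)
      + (η + 2 * (4 / 5) ^ t) * mass w (F ×ˢ G)) := by
  have hp1 : (1 : ℝ) / 2 ^ (a + 1) ≤ 1 := by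
    rw [div_le_one (by positivity)]
    exact one_le_pow₀ (by norm_num)
  have key := Cost.comb hw (F₀ := F) (G := G) (p := 1 / 2 ^ (a + 1)) (K := K + 1)
    (η := η + 2 * (4 / 5) ^ t) (by positivity) hp1 (by linarith) (by positivity) ?_ F subset_rfl
  · refine key.mono ?_
    have h1 : 4 * (K + 1) / (1 / 2 ^ (a + 1)) ≤ 2 ^ (a + 4) * K := by
      rw [div_div_eq_mul_div, div_one]
      have : (0 : ℝ) < 2 ^ a := by positivity
      rw [pow_succ, pow_add]
      nlinarith
    gcongr
  · intro F₁ hF₁ hpos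
    right
    obtain ⟨Z, hZ1, hZ2⟩ := exists_good_Z hw ht (fun A h => hA A (hF₁ h)) hB hpos
    refine ⟨F₁.filter fun A => A ∩ U ⊆ Z, Finset.filter_subset _ _, hZ1, ?_⟩
    set FZ := F₁.filter fun A => A ∩ U ⊆ Z with hFZ
    set Gb := G.filter fun B => t' < #(B ∩ U ∩ Z) with hGb
    have hFZF : FZ ⊆ F := (Finset.filter_subset _ _).trans hF₁
    have hgood := IH (U ∩ Z) FZ (G \ Gb) ?_ ?_ ?_
    · refine (Cost.split_right (Finset.filter_subset _ _) (Cost.leaf FZ Gb false) hgood).mono ?_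
      have hm : mass w (FZ ×ˢ (G \ Gb)) ≤ mass w (FZ ×ˢ G) :=
        mass_mono hw (Finset.product_subset_product_right Finset.sdiff_subset)
      have hm0 := mass_nonneg hw (FZ ×ˢ G)
      have h1 : 1 ≤ √(mass w (FZ ×ˢ G) + 1) := Real.one_le_sqrt.2 (by linarith)
      have h2 : K * √(mass w (FZ ×ˢ (G \ Gb)) + 1) ≤ K * √(mass w (FZ ×ˢ G) + 1) := by gcongr
      have h3 : η * mass w (FZ ×ˢ (G \ Gb)) ≤ η * mass w (FZ ×ˢ G) := by gcongr
      linarith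
    · intro A hA' B hB' i hi
      have hiU := hU A (hFZF hA') B (Finset.mem_sdiff.1 hB').1 hi
      exact Finset.mem_inter.2 ⟨hiU,
        (Finset.mem_filter.1 hA').2 (Finset.mem_inter.2 ⟨(Finset.mem_inter.1 hi).1, hiU⟩)⟩
    · intro A hA'
      refine (Finset.card_le_card ?_).trans (hA A (hFZF hA'))
      exact Finset.inter_subset_inter_left Finset.inter_subset_left
    · intro B hB'
      rw [Finset.mem_sdiff, hGb, Finset.mem_filter] at hB'
      rw [← Finset.inter_assoc]
      by_contra hcon
      exact hB'.2 ⟨hB'.1, not_le.1 hcon⟩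
end

section
variable {n : ℕ}

/-- Håstad–Wigderson phase: alternating rounds shrink both traces geometrically until they have at
most `t₀` elements, when one of them is announced outright. -/
theorem cost_small {t₀ : ℕ} (ht₀ : 8 ≤ t₀) {K₀ : ℝ}
    (hK₀ : 2 * (#(univ.filter fun S : Finset (Fin n) => #S ≤ t₀) : ℝ) ≤ K₀) (t : ℕ) :
    ∀ w : Finset (Fin n) × Finset (Fin n) → ℝ, (∀ p, 0 ≤ w p) →
    ∀ (U : Finset (Fin n)) (F G : Finset (Finset (Fin n))),
      (∀ A ∈ F, ∀ B ∈ G, A ∩ B ⊆ U) → (∀ A ∈ F, #(A ∩ U) ≤ t) → (∀ B ∈ G, #(B ∩ U) ≤ t) →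
      Cost w (F ×ˢ G) (2 ^ (24 * t) * K₀ * √(mass w (F ×ˢ G) + 1)
        + 16 * ((4 / 5) ^ t₀ - (4 / 5) ^ (max t t₀)) * mass w (F ×ˢ G)) := by
  have hK1 : 1 ≤ K₀ := by
    have : 0 < #(univ.filter fun S : Finset (Fin n) => #S ≤ t₀) :=
      Finset.card_pos.2 ⟨∅, by simp⟩
    have : (1 : ℝ) ≤ #(univ.filter fun S : Finset (Fin n) => #S ≤ t₀) := by exact_mod_cast this
    linarith
  induction t using Nat.strong_induction_on with
  | _ t ih =>
    intro w hw U F G hU hA hB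
    have hm0 := mass_nonneg hw (F ×ˢ G)
    have hs1 : 1 ≤ √(mass w (F ×ˢ G) + 1) := Real.one_le_sqrt.2 (by linarith)
    rcases le_or_gt t t₀ with hle | hlt
    · refine (cost_base hU (t := t₀) fun A h => (hA A h).trans hle).mono ?_
      rw [max_eq_right hle, sub_self, mul_zero, zero_mul, add_zero]
      have h1 : (1 : ℝ) ≤ 2 ^ (24 * t) := one_le_pow₀ (by norm_num)
      calc _ ≤ K₀ := hK₀
        _ = 1 * K₀ * 1 := by ring
        _ ≤ _ := by gcongr
    · set t' := 7 * t / 8 with ht'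
      have ht1 : 7 * t ≤ 8 * (t' + 1) := by omega
      have ht2 : t' < t := by omega
      set K := 2 ^ (24 * t') * K₀ with hK
      set η : ℝ := 16 * ((4 / 5) ^ t₀ - (4 / 5) ^ (max t' t₀)) with hη
      have hKge : 1 ≤ K := by
        have h1 : (1 : ℝ) ≤ 2 ^ (24 * t') := one_le_pow₀ (by norm_num)
        nlinarith
      have hη0 : 0 ≤ η := by
        have : ((4 : ℝ) / 5) ^ (max t' t₀) ≤ (4 / 5) ^ t₀ :=
          pow_le_pow_of_le_one (by norm_num) (by norm_num) (le_max_right _ _)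
        linarith
      have hK2 : 1 ≤ 2 ^ (t' + 4) * K := by
        have h1 : (1 : ℝ) ≤ 2 ^ (t' + 4) := one_le_pow₀ (by norm_num)
        nlinarith
      have step1 : ∀ (U : Finset (Fin n)) (F G : Finset (Finset (Fin n))),
          (∀ A ∈ F, ∀ B ∈ G, A ∩ B ⊆ U) → (∀ A ∈ F, #(A ∩ U) ≤ t) → (∀ B ∈ G, #(B ∩ U) ≤ t') →
          Cost w (F ×ˢ G) (2 ^ (t' + 4) * K * √(mass w (F ×ˢ G) + 1)
            + (η + 2 * (4 / 5) ^ t) * mass w (F ×ˢ G)) := by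
        intro U F G hU hA hB
        refine Cost.of_swap ?_
        rw [← mass_swap]
        exact cost_round (w := fun p => w p.swap) (fun p => hw _) (a := t') ht1 hKge hη0
          (fun U F G => ih t' ht2 _ (fun p => hw _) U F G) U G F
          (fun B hB A hA => by rw [Finset.inter_comm]; exact hU A hA B hB) hB hA
      refine (cost_round hw (a := t) ht1 hK2 (by positivity) step1 U F G hU hA hB).mono ?_
      have h1 : (2 : ℝ) ^ (t + 4) * (2 ^ (t' + 4) * K) ≤ 2 ^ (24 * t) * K₀ := by
        rw [hK, ← mul_assoc, ← mul_assoc, ← pow_add, ← pow_add]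
        gcongr
        · norm_num
        · omega
      have h2 : η + 2 * (4 / 5) ^ t + 2 * (4 / 5) ^ t
          ≤ 16 * ((4 / 5) ^ t₀ - (4 / 5) ^ (max t t₀)) := by
        have h3 : ((4 : ℝ) / 5) ^ (t - 1) ≤ (4 / 5) ^ (max t' t₀) :=
          pow_le_pow_of_le_one (by norm_num) (by norm_num) (by omega)
        have h4 : ((4 : ℝ) / 5) ^ t = (4 / 5) ^ (t - 1) * (4 / 5) := by
          rw [← pow_succ]; congr 1; omega
        rw [max_eq_left hlt.le, hη]
        linarith
      gcongr

/-! ### Product weights and large traces -/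

/-- The product weight `α × β`. -/
noncomputable def prodW (α β : Finset (Fin n) → ℝ) (p : Finset (Fin n) × Finset (Fin n)) : ℝ :=
  α p.1 * β p.2

theorem mass_prodW (α β : Finset (Fin n) → ℝ) (F G : Finset (Finset (Fin n))) :
    mass (prodW α β) (F ×ˢ G) = (∑ A ∈ F, α A) * ∑ B ∈ G, β B := by
  rw [Finset.sum_mul_sum, mass, Finset.sum_product]
  rfl

/-- If all of Bob's traces on `U` have at least `s` elements, then either few pairs are disjoint, or
some `B₀` is disjoint from a `δ` fraction of Alice's sets, which then live in `U \ B₀`. -/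
theorem cost_big {α β : Finset (Fin n) → ℝ} (hα : ∀ A, 0 ≤ α A) (hβ : ∀ B, 0 ≤ β B)
    {s u : ℕ} {K δ : ℝ} (hK : 1 ≤ K) (hδ : 0 < δ) (hδ1 : δ ≤ 1)
    (IH : ∀ (U : Finset (Fin n)) (F G : Finset (Finset (Fin n))), #U ≤ u →
      (∀ A ∈ F, ∀ B ∈ G, A ∩ B ⊆ U) →
      Cost (prodW α β) (F ×ˢ G) (K * √(mass (prodW α β) (F ×ˢ G) + 1)
        + δ * mass (prodW α β) (F ×ˢ G)))
    (U : Finset (Fin n)) (F G : Finset (Finset (Fin n))) (hUc : #U ≤ u + s)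
    (hU : ∀ A ∈ F, ∀ B ∈ G, A ∩ B ⊆ U) (hB : ∀ B ∈ G, s ≤ #(B ∩ U)) :
    Cost (prodW α β) (F ×ˢ G) (4 * K / δ * √(mass (prodW α β) (F ×ˢ G) + 1)
        + δ * mass (prodW α β) (F ×ˢ G)) := by
  have hw : ∀ p, 0 ≤ prodW α β p := fun p => mul_nonneg (hα _) (hβ _)
  refine Cost.comb hw (F₀ := F) hδ hδ1 hK hδ.le ?_ F subset_rfl
  intro F₁ hF₁ hpos
  by_cases hd : ∑ p ∈ F₁ ×ˢ G, errW (prodW α β) false p ≤ δ * mass (prodW α β) (F₁ ×ˢ G)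
  · left
    exact (Cost.leaf F₁ G false).mono (by linarith)
  · right
    push Not at hd
    obtain ⟨B₀, hB₀, hB₀'⟩ : ∃ B₀ ∈ G,
        δ * ∑ A ∈ F₁, α A ≤ ∑ A ∈ F₁.filter (fun A => Disjoint A B₀), α A := by
      by_contra hcon
      push Not at hcon
      refine absurd hd (not_lt.2 ?_)
      rw [mass_prodW, Finset.sum_product_right, ← mul_assoc, Finset.mul_sum]
      refine Finset.sum_le_sum fun B hBG => ?_
      have e : ∑ A ∈ F₁, errW (prodW α β) false (A, B)
          = (∑ A ∈ F₁.filter (fun A => Disjoint A B), α A) * β B := by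
        rw [Finset.sum_mul, Finset.sum_filter]
        refine Finset.sum_congr rfl fun A _ => ?_
        by_cases h : Disjoint A B <;> simp [errW, prodW, h]
      rw [e]
      exact mul_le_mul_of_nonneg_right (hcon B hBG).le (hβ B)
    refine ⟨F₁.filter (fun A => Disjoint A B₀), Finset.filter_subset _ _, ?_, ?_⟩
    · rw [mass_prodW, mass_prodW, ← mul_assoc]
      exact mul_le_mul_of_nonneg_right hB₀' (Finset.sum_nonneg fun B _ => hβ B)
    · refine IH (U \ B₀) _ _ ?_ ?_
      · have h1 := Finset.card_sdiff_add_card_inter U B₀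
        have h2 := hB B₀ hB₀
        rw [Finset.inter_comm] at h2
        omega
      · intro A hA B hB' i hi
        rw [Finset.mem_filter] at hA
        refine Finset.mem_sdiff.2 ⟨hU A (hF₁ hA.1) B hB' hi, ?_⟩
        exact Finset.disjoint_left.1 hA.2 (Finset.mem_inter.1 hi).1

/-- Large traces are handled by shrinking the universe by `s` at a time, small ones by `K`. -/
theorem cost_universe {s : ℕ} {K δ : ℝ} (hK : 1 ≤ K) (hδ : 0 < δ) (hδ1 : δ ≤ 1)
    (hsmall : ∀ w : Finset (Fin n) × Finset (Fin n) → ℝ, (∀ p, 0 ≤ w p) →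
      ∀ (U : Finset (Fin n)) (F G : Finset (Finset (Fin n))),
      (∀ A ∈ F, ∀ B ∈ G, A ∩ B ⊆ U) → (∀ A ∈ F, #(A ∩ U) ≤ s) → (∀ B ∈ G, #(B ∩ U) ≤ s) →
      Cost w (F ×ˢ G) (K * √(mass w (F ×ˢ G) + 1) + δ * mass w (F ×ˢ G))) (j : ℕ) :
    ∀ α β : Finset (Fin n) → ℝ, (∀ A, 0 ≤ α A) → (∀ B, 0 ≤ β B) →
    ∀ (U : Finset (Fin n)) (F G : Finset (Finset (Fin n))), #U ≤ j * s →
      (∀ A ∈ F, ∀ B ∈ G, A ∩ B ⊆ U) →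
      Cost (prodW α β) (F ×ˢ G) ((9 / δ) ^ j * K * √(mass (prodW α β) (F ×ˢ G) + 1)
        + δ * mass (prodW α β) (F ×ˢ G)) := by
  induction j with
  | zero =>
    intro α β hα hβ U F G hUc hU
    have hU0 : U = ∅ := by simpa using hUc
    rw [pow_zero, one_mul]
    refine hsmall _ (fun p => mul_nonneg (hα _) (hβ _)) U F G hU ?_ ?_ <;> simp [hU0]
  | succ j ih =>
    intro α β hα hβ U F G hUc hU
    have hw : ∀ p, 0 ≤ prodW α β p := fun p => mul_nonneg (hα _) (hβ _)
    set K' := (9 / δ) ^ j * K with hK'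
    have h9 : 1 ≤ 9 / δ := by rw [le_div_iff₀ hδ]; linarith
    have hK'K : K ≤ K' := by
      have : 1 ≤ (9 / δ) ^ j := one_le_pow₀ h9
      nlinarith
    have hUc' : #U ≤ j * s + s := by rw [← Nat.succ_mul]; exact hUc
    set Fs := F.filter fun A => #(A ∩ U) < s with hFs
    set Gs := G.filter fun B => #(B ∩ U) < s with hGs
    have hFsF : Fs ⊆ F := Finset.filter_subset _ _
    have hGsG : Gs ⊆ G := Finset.filter_subset _ _
    have hFb : ∀ A ∈ F \ Fs, s ≤ #(A ∩ U) := by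
      intro A hA
      rw [Finset.mem_sdiff, hFs, Finset.mem_filter] at hA
      by_contra hcon
      exact hA.2 ⟨hA.1, not_le.1 hcon⟩
    have hGb : ∀ B ∈ G \ Gs, s ≤ #(B ∩ U) := by
      intro A hA
      rw [Finset.mem_sdiff, hGs, Finset.mem_filter] at hA
      by_contra hcon
      exact hA.2 ⟨hA.1, not_le.1 hcon⟩
    have c1 := cost_big hα hβ (hK.trans hK'K) hδ hδ1 (ih α β hα hβ) U F (G \ Gs) hUc'
      (fun A hA B hB => hU A hA B (Finset.mem_sdiff.1 hB).1) hGb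
    have c2' := cost_big hβ hα (hK.trans hK'K) hδ hδ1 (ih β α hβ hα) U Gs (F \ Fs) hUc'
      (fun B hB A hA => by
        rw [Finset.inter_comm]; exact hU A (Finset.mem_sdiff.1 hA).1 B (hGsG hB)) hFb
    have esw : prodW β α = fun p : Finset (Fin n) × Finset (Fin n) => prodW α β p.swap := by
      funext p; simp [prodW, mul_comm]
    rw [esw, mass_swap] at c2'
    have c2 := Cost.of_swap c2'
    have c3 := hsmall _ hw U Fs Gs (fun A hA B hB => hU A (hFsF hA) B (hGsG hB))
      (fun A hA => (Finset.mem_filter.1 hA).2.le) (fun B hB => (Finset.mem_filter.1 hB).2.le)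
    refine (Cost.split_right hGsG (Cost.split_left hFsF c3 c2) c1).mono ?_
    have m1 := mass_split_right (w := prodW α β) (F := F) hGsG
    have m2 := mass_split_left (w := prodW α β) (G := Gs) hFsF
    have n1 := mass_nonneg hw (Fs ×ˢ Gs)
    have n2 := mass_nonneg hw ((F \ Fs) ×ˢ Gs)
    have n3 := mass_nonneg hw (F ×ˢ (G \ Gs))
    set x := √(mass (prodW α β) (F ×ˢ G) + 1)
    have s1 : √(mass (prodW α β) (Fs ×ˢ Gs) + 1) ≤ x := Real.sqrt_le_sqrt (by linarith)
    have s2 : √(mass (prodW α β) ((F \ Fs) ×ˢ Gs) + 1) ≤ x := Real.sqrt_le_sqrt (by linarith)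
    have s3 : √(mass (prodW α β) (F ×ˢ (G \ Gs)) + 1) ≤ x := Real.sqrt_le_sqrt (by linarith)
    have hx : 0 ≤ x := Real.sqrt_nonneg _
    have hK'0 : 0 < K' := by linarith
    have hKδ : K ≤ K' / δ := by rw [le_div_iff₀ hδ]; nlinarith
    have t1 : K * √(mass (prodW α β) (Fs ×ˢ Gs) + 1) ≤ K' / δ * x := by gcongr
    have t2 : 4 * K' / δ * √(mass (prodW α β) ((F \ Fs) ×ˢ Gs) + 1) ≤ 4 * K' / δ * x := by gcongr
    have t3 : 4 * K' / δ * √(mass (prodW α β) (F ×ˢ (G \ Gs)) + 1) ≤ 4 * K' / δ * x := by gcongr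
    have e : (9 / δ) ^ (j + 1) * K * x = K' / δ * x + 4 * K' / δ * x + 4 * K' / δ * x := by
      rw [hK', pow_succ]; ring
    have em : δ * mass (prodW α β) (F ×ˢ G) = δ * mass (prodW α β) (Fs ×ˢ Gs)
        + δ * mass (prodW α β) ((F \ Fs) ×ˢ Gs) + δ * mass (prodW α β) (F ×ˢ (G \ Gs)) := by
      rw [m1, m2]; ring
    rw [e, em]
    linarith
end

/-! ### The product case -/

/-- With `s ≈ √(nL)`, announcing a set of `O(L)` elements of `[n]` takes only `O(s)` bits. -/
theorem card_small_sets {n L s : ℕ} (hL : 1 ≤ L) (hLs : L ≤ s) (hs : n * L ≤ s * s) :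
    (#(univ.filter fun S : Finset (Fin n) => #S ≤ 20 * L) : ℝ) ≤ 2 ^ (42 * s) := by
  -- weigh each set `S` by `x ^ #S` with `x = L / s`
  have hL0 : (0 : ℝ) < L := by exact_mod_cast hL
  have hLs' : (L : ℝ) ≤ s := by exact_mod_cast hLs
  have hs0 : (0 : ℝ) < s := hL0.trans_le hLs'
  have hns : (n : ℝ) * L ≤ s * s := by exact_mod_cast hs
  set x : ℝ := L / s with hx
  have hx0 : 0 < x := by positivity
  have hx1 : x ≤ 1 := by rw [hx, div_le_one hs0]; exact hLs'
  have h1 : (#(univ.filter fun S : Finset (Fin n) => #S ≤ 20 * L) : ℝ) * x ^ (20 * L)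
      ≤ (x + 1) ^ n := by
    have e := Fintype.sum_pow_mul_eq_add_pow (Fin n) x 1
    rw [Fintype.card_fin] at e
    rw [← e, ← nsmul_eq_mul, ← Finset.sum_const]
    refine (Finset.sum_le_sum (g := fun S => x ^ #S * 1 ^ (n - #S)) fun S hS => ?_).trans
      (Finset.sum_le_sum_of_subset_of_nonneg (Finset.filter_subset _ _) fun S _ _ => by positivity)
    rw [one_pow, mul_one]
    exact pow_le_pow_of_le_one hx0.le hx1 (Finset.mem_filter.1 hS).2
  have h2 : (x + 1) ^ n ≤ Real.exp s := by
    calc (x + 1) ^ n ≤ (Real.exp x) ^ n := by gcongr; exact Real.add_one_le_exp x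
      _ = Real.exp (n * x) := by rw [← Real.exp_nat_mul]
      _ ≤ _ := by
        rw [Real.exp_le_exp, hx, ← mul_div_assoc, div_le_iff₀ hs0]; exact hns
  have h3 : 1 ≤ x ^ (20 * L) * Real.exp (20 * s) := by
    have h4 : 1 ≤ x * Real.exp (s / L) := by
      have h5 : (s : ℝ) / L ≤ Real.exp (s / L) := by
        linarith [Real.add_one_le_exp ((s : ℝ) / L)]
      calc (1 : ℝ) = x * (s / L) := by rw [hx]; field_simp
        _ ≤ _ := by gcongr
    have h6 := one_le_pow₀ h4 (n := 20 * L)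
    rw [mul_pow, ← Real.exp_nat_mul] at h6
    have e : ((20 * L : ℕ) : ℝ) * (s / L) = 20 * s := by push_cast; field_simp
    rwa [e] at h6
  have h7 : Real.exp s * Real.exp (20 * s) ≤ 2 ^ (42 * s) := by
    rw [← Real.exp_add]
    have e1 : (s : ℝ) + 20 * s = ((21 * s : ℕ) : ℝ) * 1 := by push_cast; ring
    rw [e1, Real.exp_nat_mul]
    have e2 : (2 : ℝ) ^ (42 * s) = (2 ^ 2) ^ (21 * s) := by rw [← pow_mul]; congr 1; ring
    rw [e2]
    gcongr
    linarith [Real.exp_one_lt_d9]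
  refine le_trans ?_ h7
  set N : ℝ := (#(univ.filter fun S : Finset (Fin n) => #S ≤ 20 * L) : ℝ)
  have hN : 0 ≤ N := Nat.cast_nonneg _
  calc N = N * 1 := (mul_one _).symm
    _ ≤ N * (x ^ (20 * L) * Real.exp (20 * s)) := by gcongr
    _ = N * x ^ (20 * L) * Real.exp (20 * s) := by ring
    _ ≤ _ := by gcongr; exact h1.trans h2

/-- The phases combined: traces of at least `s` elements are removed in about `n / s` steps of factor
`2^{O(L)}` each, and the small traces cost `2^{O(s)}`. -/
theorem cost_product {n L s : ℕ} (hL : 1 ≤ L) (hLn : L ≤ n) (hs : n * L ≤ s * s)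
    {α β : Finset (Fin n) → ℝ} (hα : ∀ A, 0 ≤ α A) (hβ : ∀ B, 0 ≤ β B) :
    Cost (prodW α β) (univ ×ˢ univ) (2 ^ (77 * s) * √(mass (prodW α β) (univ ×ˢ univ) + 1)
      + (1 / 2) ^ L * mass (prodW α β) (univ ×ˢ univ)) := by
  have hw : ∀ p, 0 ≤ prodW α β p := fun p => mul_nonneg (hα _) (hβ _)
  have hLs : L ≤ s := by nlinarith
  have hcard := card_small_sets hL hLs hs
  set δ : ℝ := (1 / 2) ^ L with hδ
  have hδ0 : 0 < δ := by positivity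
  have hδ1 : δ ≤ 1 := pow_le_one₀ (by norm_num) (by norm_num)
  have hq : 16 * (4 / 5 : ℝ) ^ (20 * L) ≤ δ := by
    have h1 : ((4 : ℝ) / 5) ^ (20 * L) ≤ (1 / 32) ^ L := by
      rw [pow_mul]; gcongr; norm_num
    have h2 : ((1 : ℝ) / 32) ^ L = δ * (1 / 16) ^ L := by
      rw [hδ, ← mul_pow]; norm_num
    have h3 : ((1 : ℝ) / 16) ^ L ≤ 1 / 16 := pow_le_of_le_one (by norm_num) (by norm_num) (by omega)
    nlinarith
  have hsmall := fun w hw U F G hU hA hB =>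
    (cost_small (n := n) (t₀ := 20 * L) (by omega) (K₀ := 2 ^ (43 * s))
    (by
      have : (2 : ℝ) ^ (43 * s) = 2 ^ s * 2 ^ (42 * s) := by rw [← pow_add]; congr 1; ring
      rw [this]
      have h2 : (2 : ℝ) ≤ 2 ^ s := le_self_pow₀ (by norm_num) (by omega)
      gcongr) s w hw U F G hU hA hB).mono
    (show _ ≤ 2 ^ (67 * s) * √(mass w (F ×ˢ G) + 1) + δ * mass w (F ×ˢ G) by
      have e : (2 : ℝ) ^ (24 * s) * 2 ^ (43 * s) = 2 ^ (67 * s) := by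
        rw [← pow_add]; congr 1; ring
      rw [e]
      have h1 := mass_nonneg hw (F ×ˢ G)
      have h2 : (0 : ℝ) < (4 / 5) ^ (max s (20 * L)) := by positivity
      gcongr
      linarith)
  have hj : n ≤ (n / s + 1) * s := by
    have := Nat.lt_div_mul_add (a := n) (b := s) (by omega)
    rw [Nat.succ_mul]; omega
  have h := cost_universe (one_le_pow₀ (by norm_num)) hδ0 hδ1 hsmall (n / s + 1) α β hα hβ
    univ univ univ (by simpa using hj) (by simp)
  refine h.mono ?_
  have hLj : L * (n / s + 1) ≤ 2 * s := by
    have h1 : n / s * s ≤ n := Nat.div_mul_le_self n s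
    have h2 : L * (n / s) ≤ s := by
      by_contra hcon
      push Not at hcon
      have : 0 < s := by omega
      nlinarith
    rw [mul_add]; omega
  have h1 : (9 / δ) ^ (n / s + 1) ≤ 2 ^ (10 * s) := by
    have h2 : 9 / δ ≤ 2 ^ (5 * L) := by
      have e : 9 / δ = 9 * 2 ^ L := by rw [hδ, one_div, inv_pow]; field_simp
      have e2 : (2 : ℝ) ^ (5 * L) = 2 ^ (4 * L) * 2 ^ L := by rw [← pow_add]; congr 1; ring
      rw [e, e2]
      have : (2 : ℝ) ^ (4 * 1) ≤ 2 ^ (4 * L) := pow_le_pow_right₀ (by norm_num) (by omega)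
      gcongr
      norm_num at this ⊢
      linarith
    calc (9 / δ) ^ (n / s + 1) ≤ (2 ^ (5 * L)) ^ (n / s + 1) := by gcongr
      _ = 2 ^ (5 * (L * (n / s + 1))) := by rw [← pow_mul]; congr 1; ring
      _ ≤ _ := pow_le_pow_right₀ (by norm_num) (by omega)
  have e : (2 : ℝ) ^ (77 * s) = 2 ^ (10 * s) * 2 ^ (67 * s) := by rw [← pow_add]; congr 1; ring
  rw [e]
  gcongr

/-- Disjointness under a product distribution, with error `3 * 2^{-L}` and `2^{O(√(nL))}`
rectangles. -/
theorem product_partition {n L s : ℕ} (hn : 0 < n) (hL : 1 ≤ L) (hs : n * L ≤ s * s)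
    {α β : Finset (Fin n) → ℝ} (hα : ∀ A, 0 ≤ α A) (hβ : ∀ B, 0 ≤ β B)
    (hα1 : ∑ A, α A = 1) (hβ1 : ∑ B, β B = 1) :
    ∃ m : ℕ, (m : ℝ) ≤ 2 ^ (158 * s) ∧
      ∃ F G : Fin m → Finset (Finset (Fin n)), ∃ b : Fin m → Bool,
      (∀ i j, i ≠ j → Disjoint (F i ×ˢ G i) (F j ×ˢ G j)) ∧
      (∀ p, ∃ i, p ∈ F i ×ˢ G i) ∧
      ∑ i, ∑ p ∈ F i ×ˢ G i, errW (prodW α β) (b i) p ≤ 3 * (1 / 2) ^ L := by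
  have hs0 : 0 < s := by
    by_contra hcon
    have h0 : s = 0 := by omega
    subst h0
    have := Nat.mul_pos hn hL
    omega
  set δ : ℝ := (1 / 2) ^ L with hδ
  have hδ0 : 0 < δ := by positivity
  have hδ1 : δ ≤ 1 := pow_le_one₀ (by norm_num) (by norm_num)
  -- It suffices to bound the cost for a suitably scaled weight.
  suffices h : ∃ M c : ℝ, 0 < M ∧ c ≤ 2 ^ (158 * s) ∧ c ≤ 3 * δ * M ∧
      Cost (prodW (fun A => M * α A) β) (univ ×ˢ univ) c by
    obtain ⟨M, c, hM, hc1, hc2, hcost⟩ := h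
    obtain ⟨m, F, G, b, h1, h2, h3⟩ := hcost.extract
    have e : ∀ i, ∑ p ∈ F i ×ˢ G i, errW (prodW (fun A => M * α A) β) (b i) p
        = M * ∑ p ∈ F i ×ˢ G i, errW (prodW α β) (b i) p := by
      intro i
      rw [Finset.mul_sum]
      refine Finset.sum_congr rfl fun p _ => ?_
      simp only [errW, prodW]
      split_ifs <;> ring
    have hE : 0 ≤ ∑ i, ∑ p ∈ F i ×ˢ G i, errW (prodW α β) (b i) p :=
      Finset.sum_nonneg fun i _ => Finset.sum_nonneg fun p _ =>
        errW_nonneg (fun p => mul_nonneg (hα _) (hβ _)) _ p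
    rw [Finset.sum_congr rfl fun i _ => e i, ← Finset.mul_sum] at h3
    have hm0 : (0 : ℝ) ≤ m := Nat.cast_nonneg m
    refine ⟨m, ?_, F, G, b, h1, fun p => (h2 p).1 (by simp), ?_⟩
    · nlinarith
    · refine le_of_mul_le_mul_left ?_ hM
      linarith
  have hαM : ∀ M : ℝ, 0 ≤ M → ∀ A, 0 ≤ M * α A := fun M hM A => mul_nonneg hM (hα A)
  rcases le_or_gt L n with hLn | hLn
  · have hLs : L ≤ s := by nlinarith
    set K : ℝ := 2 ^ (77 * s) with hK
    have hK1 : 1 ≤ K := one_le_pow₀ (by norm_num)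
    have hM1 : 1 ≤ K / δ := by rw [le_div_iff₀ hδ0]; linarith
    have hcost := cost_product hL hLn hs (hαM ((K / δ) ^ 2) (by positivity)) hβ
    rw [mass_prodW, ← Finset.mul_sum, hα1, hβ1, mul_one, mul_one] at hcost
    have hsq : √((K / δ) ^ 2 + 1) ≤ 2 * (K / δ) := by
      rw [Real.sqrt_le_left (by positivity)]
      nlinarith
    have e1 : δ * (K / δ) ^ 2 = K * (K / δ) := by field_simp
    refine ⟨(K / δ) ^ 2, 3 * (K * (K / δ)), by positivity, ?_, ?_, hcost.mono ?_⟩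
    · have e2 : 3 * (K * (K / δ)) = 3 * (K * K * 2 ^ L) := by
        rw [hδ, one_div, inv_pow]; field_simp
      rw [e2]
      have h4 : (2 : ℝ) ^ L ≤ 2 ^ s := pow_le_pow_right₀ (by norm_num) hLs
      have h5 : (4 : ℝ) ≤ 2 ^ (3 * s) := by
        calc (4 : ℝ) ≤ 2 ^ (3 * 1) := by norm_num
          _ ≤ _ := pow_le_pow_right₀ (by norm_num) (by omega)
      calc 3 * (K * K * 2 ^ L) ≤ 2 ^ (3 * s) * (K * K * 2 ^ s) := by
            gcongr; linarith
        _ = 2 ^ (158 * s) := by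
            rw [hK, ← pow_add, ← pow_add, ← pow_add]; congr 1; ring
    · rw [mul_assoc, e1]
    · rw [← hδ, e1]
      nlinarith
  · -- Here `n ≤ s`, and announcing all of `A` is affordable.
    have hns : n ≤ s := by nlinarith
    refine ⟨2 * 2 ^ n / δ, 2 * 2 ^ n, by positivity, ?_, ?_, ?_⟩
    · rw [← pow_succ']
      exact pow_le_pow_right₀ (by norm_num) (by omega)
    · rw [mul_assoc, mul_div_cancel₀ _ hδ0.ne']
      have : (0 : ℝ) < 2 ^ n := by positivity
      linarith
    · refine (cost_base (U := univ) (t := n) (by simp) fun A _ => ?_).mono ?_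
      · simpa using Finset.card_le_univ A
      · have h2 : #(univ.filter fun S : Finset (Fin n) => #S ≤ n) ≤ 2 ^ n := by
          refine (Finset.card_filter_le _ _).trans ?_
          simp
        have h3 : (#(univ.filter fun S : Finset (Fin n) => #S ≤ n) : ℝ) ≤ 2 ^ n := by
          exact_mod_cast h2
        linarith

/-! ### From bounded mutual information to the product case -/

/-- The term of the mutual information sum at weight `x`, where the product weight is `y`. -/
noncomputable def infoTerm (x y : ℝ) : ℝ := if x = 0 then 0 else x * Real.logb 2 (x / y)

/-- Summed over all pairs this gives nonnegativity of mutual information. -/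
theorem infoTerm_ge {x y : ℝ} (hx : 0 ≤ x) (hy : 0 ≤ y) (hxy : y = 0 → x = 0) :
    (x - y) / Real.log 2 ≤ infoTerm x y := by
  have hl : 0 < Real.log 2 := Real.log_pos (by norm_num)
  unfold infoTerm
  split_ifs with h
  · subst h
    exact div_nonpos_of_nonpos_of_nonneg (by linarith) hl.le
  · have hx0 : 0 < x := lt_of_le_of_ne hx (Ne.symm h)
    have hy0 : 0 < y := lt_of_le_of_ne hy fun e => h (hxy e.symm)
    rw [Real.logb, ← mul_div_assoc]
    gcongr
    have h1 := Real.one_sub_inv_le_log_of_pos (div_pos hx0 hy0)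
    calc x - y = x * (1 - (x / y)⁻¹) := by field_simp
      _ ≤ _ := by gcongr

/-- Pairs with `x > 2^T y` contribute at least `T x` to the mutual information; the other terms
are bounded below by `-y`. -/
theorem infoTerm_tail {x y T : ℝ} (hx : 0 ≤ x) (hy : 0 ≤ y) (hxy : y = 0 → x = 0) :
    T * (if 2 ^ T * y < x then x else 0) ≤ infoTerm x y + y := by
  have hl : 1 / 2 < Real.log 2 := by linarith [Real.log_two_gt_d9]
  split_ifs with h
  · have hx0 : 0 < x := lt_of_le_of_lt (by positivity) h
    have hy0 : 0 < y := lt_of_le_of_ne hy fun e => hx0.ne' (hxy e.symm)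
    have h1 : T ≤ Real.logb 2 (x / y) := by
      rw [Real.le_logb_iff_rpow_le (by norm_num) (by positivity), le_div_iff₀ hy0]
      exact h.le
    rw [infoTerm, if_neg hx0.ne', mul_comm]
    nlinarith
  · rw [mul_zero, infoTerm]
    split_ifs with h0
    · linarith
    · have hx0 : 0 < x := lt_of_le_of_ne hx (Ne.symm h0)
      have hy0 : 0 < y := lt_of_le_of_ne hy fun e => h0 (hxy e.symm)
      have h1 : Real.logb 2 (y / x) ≤ y / x := by
        have hz : 0 < y / x := by positivity
        rw [Real.logb_le_iff_le_rpow (by norm_num) hz]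
        have h2 : Real.log (y / x) ≤ y / x * Real.log 2 := by
          -- with `z = y / x`: `log z = log 2 + log (z / 2) ≤ log 2 + z / 2 - 1 ≤ z / 2`
          have h3 := Real.log_le_sub_one_of_pos (show 0 < y / x / 2 by positivity)
          rw [Real.log_div hz.ne' (by norm_num)] at h3
          nlinarith [Real.log_two_lt_d9, Real.log_two_gt_d9]
        calc y / x = Real.exp (Real.log (y / x)) := (Real.exp_log hz).symm
          _ ≤ Real.exp (y / x * Real.log 2) := Real.exp_le_exp.2 h2
          _ = 2 ^ (y / x) := by rw [Real.rpow_def_of_pos (by norm_num), mul_comm]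
      have h4 : Real.logb 2 (x / y) = - Real.logb 2 (y / x) := by
        rw [← Real.logb_inv, inv_div]
      rw [h4]
      have h5 : x * Real.logb 2 (y / x) ≤ x * (y / x) := by gcongr
      have h6 : x * (y / x) = y := by field_simp
      linarith

/-- for every distribution `μ` on `2^[n] × 2^[n]` with mutual information
at most `k` and error `ε ∈ (0, 1/2)`, there is a partition of `2^[n] × 2^[n]` into at most
`2^{C√(n(k+1)/ε)}` labeled combinatorial rectangles computing disjointness with error at
most `ε` under `μ`. -/
theorem statement12 :
    ∃ C : ℝ, 0 < C ∧ ∀ n : ℕ, 0 < n →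
      ∀ μ : Finset (Fin n) × Finset (Fin n) → ℝ,
        (∀ p, 0 ≤ μ p) → (∑ p, μ p) = 1 →
        ∀ k : ℝ,
          (∑ A, ∑ B,
              (if μ (A, B) = 0 then 0 else
                μ (A, B) * Real.logb 2
                  (μ (A, B) / ((∑ B', μ (A, B')) * (∑ A', μ (A', B)))))
            ≤ k) →
          ∀ ε : ℝ, 0 < ε → ε < 1 / 2 →
            ∃ m : ℕ, 0 < m ∧
              (m : ℝ) ≤ (2 : ℝ) ^ (C * Real.sqrt (n * (k + 1) / ε)) ∧
              ∃ ℱ 𝒢 : Fin m → Finset (Finset (Fin n)), ∃ b : Fin m → Bool,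
                (∀ i j, i ≠ j → Disjoint (ℱ i ×ˢ 𝒢 i) (ℱ j ×ˢ 𝒢 j)) ∧
                (∀ p : Finset (Fin n) × Finset (Fin n), ∃ i, p ∈ ℱ i ×ˢ 𝒢 i) ∧
                ∑ i, ∑ p ∈ ℱ i ×ˢ 𝒢 i,
                    (if (Disjoint p.1 p.2 ↔ b i = true) then 0 else μ p)
                  ≤ ε := by
  refine ⟨948, by norm_num, ?_⟩
  intro n hn μ hμ hμ1 k hk ε hε hε2
  set α : Finset (Fin n) → ℝ := fun A => ∑ B', μ (A, B') with hα
  set β : Finset (Fin n) → ℝ := fun B => ∑ A', μ (A', B) with hβ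
  have hα0 : ∀ A, 0 ≤ α A := fun A => Finset.sum_nonneg fun _ _ => hμ _
  have hβ0 : ∀ B, 0 ≤ β B := fun B => Finset.sum_nonneg fun _ _ => hμ _
  have hα1 : ∑ A, α A = 1 := by rw [← hμ1, Fintype.sum_prod_type]
  have hβ1 : ∑ B, β B = 1 := by rw [← hμ1, Fintype.sum_prod_type_right]
  have hν0 : ∀ p, 0 ≤ prodW α β p := fun p => mul_nonneg (hα0 _) (hβ0 _)
  have hν1 : ∑ p, prodW α β p = 1 := by
    rw [Fintype.sum_prod_type]
    simp only [prodW]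
    rw [← Fintype.sum_mul_sum, hα1, hβ1, one_mul]
  have hac : ∀ p, prodW α β p = 0 → μ p = 0 := by
    intro p hp
    have h1 : μ p ≤ α p.1 :=
      Finset.single_le_sum (f := fun B' => μ (p.1, B')) (fun _ _ => hμ _) (Finset.mem_univ p.2)
    have h2 : μ p ≤ β p.2 :=
      Finset.single_le_sum (f := fun A' => μ (A', p.2)) (fun _ _ => hμ _) (Finset.mem_univ p.1)
    rcases mul_eq_zero.1 hp with h | h
    · exact le_antisymm (h ▸ h1) (hμ p)
    · exact le_antisymm (h ▸ h2) (hμ p)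
  have hI : ∑ p, infoTerm (μ p) (prodW α β p) ≤ k := by
    rw [Fintype.sum_prod_type]
    exact hk
  have hk0 : 0 ≤ k := by
    refine le_trans ?_ hI
    have h1 : ∑ p, (μ p - prodW α β p) / Real.log 2 ≤ ∑ p, infoTerm (μ p) (prodW α β p) :=
      Finset.sum_le_sum fun p _ => infoTerm_ge (hμ p) (hν0 p) (hac p)
    rw [← Finset.sum_div, Finset.sum_sub_distrib, hμ1, hν1, sub_self, zero_div] at h1
    exact h1
  set y : ℝ := (k + 1) / ε with hy
  have hy2 : 1 / ε ≤ y := by rw [hy]; gcongr; linarith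
  have hε1 : 2 ≤ 1 / ε := by rw [le_div_iff₀ hε]; linarith
  have hy1 : 1 ≤ y := by linarith
  -- Away from a set of `μ`-weight `ε / 2`, `μ ≤ 2^T ν`.
  set T : ℝ := 2 * y with hT
  have htail : ∑ p, (if 2 ^ T * prodW α β p < μ p then μ p else 0) ≤ ε / 2 := by
    have h1 : ∑ p, T * (if 2 ^ T * prodW α β p < μ p then μ p else 0)
        ≤ ∑ p, (infoTerm (μ p) (prodW α β p) + prodW α β p) :=
      Finset.sum_le_sum fun p _ => infoTerm_tail (hμ p) (hν0 p) (hac p)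
    rw [← Finset.mul_sum, Finset.sum_add_distrib, hν1] at h1
    have h2 : T * (ε / 2) = k + 1 := by rw [hT, hy]; field_simp
    refine le_of_mul_le_mul_left ?_ (show 0 < T by linarith)
    linarith
  set L : ℕ := ⌈8 * y⌉₊ with hL
  have hL8 : 8 * y ≤ L := Nat.le_ceil _
  have hL9 : (L : ℝ) ≤ 9 * y := by
    have := Nat.ceil_lt_add_one (show 0 ≤ 8 * y by linarith)
    linarith
  have hL1 : 1 ≤ L := by
    have : (1 : ℝ) ≤ L := by linarith
    exact_mod_cast this
  set s : ℕ := Nat.sqrt (n * L) + 1 with hs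
  have hsL : n * L ≤ s * s := (Nat.lt_succ_sqrt (n * L)).le
  have hs6 : (s : ℝ) ≤ 6 * √(n * (k + 1) / ε) := by
    have hn1 : (1 : ℝ) ≤ n := by exact_mod_cast hn
    have h1 : (Nat.sqrt (n * L) : ℝ) ≤ √((n * L : ℕ) : ℝ) := Real.nat_sqrt_le_real_sqrt
    have h2 : √((n * L : ℕ) : ℝ) ≤ 3 * √(n * (k + 1) / ε) := by
      rw [Real.sqrt_le_left (by positivity), mul_pow, Real.sq_sqrt (by positivity)]
      push_cast
      rw [mul_div_assoc, ← hy]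
      nlinarith
    have h3 : 1 ≤ √(n * (k + 1) / ε) := by
      rw [Real.one_le_sqrt, mul_div_assoc, ← hy]
      nlinarith
    rw [hs]
    push_cast
    linarith
  obtain ⟨m, hm, F, G, b, hd, hcov, herr⟩ := product_partition hn hL1 hsL hα0 hβ0 hα1 hβ1
  refine ⟨m, ?_, ?_, F, G, b, hd, hcov, ?_⟩
  · obtain ⟨i, _⟩ := hcov (∅, ∅)
    exact i.pos
  · refine hm.trans ?_
    rw [← Real.rpow_natCast]
    refine Real.rpow_le_rpow_of_exponent_le (by norm_num) ?_
    push_cast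
    linarith
  · have hpt : ∀ i, ∀ p, (if (Disjoint p.1 p.2 ↔ b i = true) then 0 else μ p)
        ≤ 2 ^ T * errW (prodW α β) (b i) p
          + (if 2 ^ T * prodW α β p < μ p then μ p else 0) := by
      intro i p
      have := hμ p
      have h0 : 0 ≤ 2 ^ T * prodW α β p := mul_nonneg (by positivity) (hν0 p)
      unfold errW
      split_ifs <;> linarith
    have hsum : ∑ i, ∑ p ∈ F i ×ˢ G i, (if 2 ^ T * prodW α β p < μ p then μ p else 0)
        ≤ ∑ p, (if 2 ^ T * prodW α β p < μ p then μ p else 0) := by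
      rw [← Finset.sum_biUnion fun i _ j _ hij => hd i j hij]
      refine Finset.sum_le_sum_of_subset_of_nonneg (Finset.subset_univ _) fun p _ _ => ?_
      split_ifs
      · exact hμ p
      · exact le_rfl
    have hsmall : 2 ^ T * (3 * (1 / 2) ^ L) ≤ ε / 2 := by
      -- `6 / ε ≤ 2^{6/ε}` and `T + 6/ε ≤ L`
      have h1 : 6 / ε ≤ (2 : ℝ) ^ (6 * y) := by
        have h2 : 6 / ε ≤ 6 * y := by
          calc 6 / ε = 6 * (1 / ε) := by ring
            _ ≤ _ := by gcongr
        have h3 := one_add_mul_self_le_rpow_one_add (s := 1) (by norm_num)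
          (p := 6 * y) (by linarith)
        norm_num at h3
        linarith
      have h4 : (2 : ℝ) ^ T * 2 ^ (6 * y) ≤ 2 ^ L := by
        rw [← Real.rpow_add (by norm_num), ← Real.rpow_natCast]
        exact Real.rpow_le_rpow_of_exponent_le (by norm_num) (by linarith)
      have h5 : (2 : ℝ) ^ T * (6 / ε) ≤ 2 ^ L := le_trans (by gcongr) h4
      have h6 : (0 : ℝ) < 2 ^ L := by positivity
      rw [one_div, inv_pow]
      rw [← mul_assoc, ← div_eq_mul_inv, div_le_iff₀ h6]
      have h7 : (2 : ℝ) ^ T * 3 = 2 ^ T * (6 / ε) * (ε / 2) := by field_simp; norm_num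
      rw [h7, mul_comm (ε / 2)]
      gcongr
    calc _ ≤ ∑ i, ∑ p ∈ F i ×ˢ G i, (2 ^ T * errW (prodW α β) (b i) p
          + (if 2 ^ T * prodW α β p < μ p then μ p else 0)) :=
        Finset.sum_le_sum fun i _ => Finset.sum_le_sum fun p _ => hpt i p
      _ = 2 ^ T * ∑ i, ∑ p ∈ F i ×ˢ G i, errW (prodW α β) (b i) p
          + ∑ i, ∑ p ∈ F i ×ˢ G i, (if 2 ^ T * prodW α β p < μ p then μ p else 0) := by
        simp only [Finset.sum_add_distrib, Finset.mul_sum]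
      _ ≤ 2 ^ T * (3 * (1 / 2) ^ L) + ε / 2 := by
        gcongr
        exact hsum.trans htail
      _ ≤ ε := by linarith
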